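/- arXiv:2509.09287 — 2 statements merged into one kernel-verified Lean document; each statement's English description precedes it below -/
import Mathlib

section
/- Let (Γ, μ) be a finite measure space and let j : Γ × ℝ^d → ℝ satisfy: (H1) for every ξ ∈ ℝ^d the map x ↦ j(x, ξ) is measurable and j(·, 0) ∈ L¹(Γ, μ); (H2) for μ-a.e. x ∈ Γ the map ξ ↦ j(x, ξ) is locally Lipschitz on ℝ^d; (H3) there exist k₀, k₁ ≥ 0 such that for μ-a.e. x and all ξ ∈ ℝ^d, every η ∈ ∂j(x, ξ) satisfies |η| ≤ k₀ + k₁|ξ|. Define J(v) := ∫_Γ j(x, v(x)) dμ(x) for v ∈ L²(Γ, μ; ℝ^d). Let u, v ∈ L²(Γ, μ; ℝ^d) and assume the map x ↦ j⁰(x, u(x); v(x)) is measurable. Then J⁰(u; v) ≤ ∫_Γ j⁰(x, u(x); v(x)) dμ(x), where J⁰ is the Clarke generalized directional derivative of J on L²(Γ, μ; ℝ^d). -/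
open Filter Topology MeasureTheory
open scoped RealInnerProductSpace

/-- The Clarke generalized directional derivative of `f` at `x` in the direction `v`:
`f⁰(x; v) = limsup_{y → x, λ ↓ 0} (f (y + λ v) - f y) / λ`. -/
noncomputable def clarkeDeriv {X : Type*} [NormedAddCommGroup X] [NormedSpace ℝ X]
    (f : X → ℝ) (x v : X) : ℝ :=
  Filter.limsup (fun p : X × ℝ => (f (p.1 + p.2 • v) - f p.1) / p.2)
    ((𝓝 x) ×ˢ (𝓝[>] (0 : ℝ)))

/-- The Clarke subdifferential of `f` at `x`, identified with a subset of the space itself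
via the inner product: `∂f(x) = {η : ⟪η, v⟫ ≤ f⁰(x; v) for all v}`. -/
def clarkeSubdiffInner {X : Type*} [NormedAddCommGroup X] [InnerProductSpace ℝ X]
    (f : X → ℝ) (x : X) : Set X :=
  {η | ∀ v : X, ⟪η, v⟫ ≤ clarkeDeriv f x v}

section Aux

variable {X : Type*} [NormedAddCommGroup X]

theorem aux_tendsto [NormedSpace ℝ X] (x v : X) :
    Tendsto (fun p : X × ℝ => p.1 + p.2 • v) ((𝓝 x) ×ˢ (𝓝[>] (0 : ℝ))) (𝓝 x) := by
  have h : Tendsto (fun p : X × ℝ => p.1 + p.2 • v) (𝓝 (x, (0:ℝ))) (𝓝 (x + (0:ℝ) • v)) := by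
    apply Continuous.tendsto
    fun_prop
  rw [zero_smul, add_zero, nhds_prod_eq] at h
  exact h.mono_left (Filter.prod_mono le_rfl nhdsWithin_le_nhds)

theorem aux_pos (x : X) : ∀ᶠ p : X × ℝ in (𝓝 x) ×ˢ (𝓝[>] (0 : ℝ)), 0 < p.2 :=
  (tendsto_snd (f := 𝓝 x)).eventually (self_mem_nhdsWithin : Set.Ioi (0:ℝ) ∈ 𝓝[>] (0:ℝ))

theorem aux_bdd [NormedSpace ℝ X] {f : X → ℝ} (hf : LocallyLipschitz f) (x : X) :
    ∃ K : ℝ, 0 ≤ K ∧ ∀ v : X, ∀ᶠ p : X × ℝ in (𝓝 x) ×ˢ (𝓝[>] (0 : ℝ)),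
      |(f (p.1 + p.2 • v) - f p.1) / p.2| ≤ K * ‖v‖ := by
  obtain ⟨K, t, ht, hK⟩ := hf x
  refine ⟨K, K.2, fun v => ?_⟩
  filter_upwards [(aux_tendsto x v).eventually ht, (tendsto_fst (g := 𝓝[>] (0:ℝ))).eventually ht,
    aux_pos x] with p h1 h2 h3
  have := hK.dist_le_mul _ h1 _ h2
  rw [Real.dist_eq, dist_eq_norm, add_sub_cancel_left, norm_smul, Real.norm_eq_abs,
    abs_of_pos h3] at this
  rw [abs_div, abs_of_pos h3, div_le_iff₀ h3]
  linarith

theorem aux_le [NormedSpace ℝ X] {f : X → ℝ} (hf : LocallyLipschitz f) (x v : X) {c : ℝ}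
    (h : ∀ᶠ p : X × ℝ in (𝓝 x) ×ˢ (𝓝[>] (0 : ℝ)), (f (p.1 + p.2 • v) - f p.1) / p.2 ≤ c) :
    clarkeDeriv f x v ≤ c := by
  obtain ⟨K, -, hK⟩ := aux_bdd hf x
  refine limsup_le_of_le ?_ h
  have : IsBoundedUnder (· ≥ ·) ((𝓝 x) ×ˢ (𝓝[>] (0 : ℝ)))
      (fun p : X × ℝ => (f (p.1 + p.2 • v) - f p.1) / p.2) :=
    isBoundedUnder_of_eventually_ge ((hK v).mono fun p hp => (abs_le.1 hp).1)
  exact this.isCoboundedUnder_le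

theorem aux_lt [NormedSpace ℝ X] {f : X → ℝ} (hf : LocallyLipschitz f) (x v : X) {c : ℝ}
    (h : clarkeDeriv f x v < c) :
    ∀ᶠ p : X × ℝ in (𝓝 x) ×ˢ (𝓝[>] (0 : ℝ)), (f (p.1 + p.2 • v) - f p.1) / p.2 < c := by
  obtain ⟨K, -, hK⟩ := aux_bdd hf x
  refine eventually_lt_of_limsup_lt h ?_
  exact isBoundedUnder_of_eventually_le ((hK v).mono fun p hp => (abs_le.1 hp).2)

theorem aux_add [NormedSpace ℝ X] {f : X → ℝ} (hf : LocallyLipschitz f) (x v w : X) :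
    clarkeDeriv f x (v + w) ≤ clarkeDeriv f x v + clarkeDeriv f x w := by
  refine le_of_forall_pos_le_add fun ε hε => ?_
  apply aux_le hf
  have h1 := aux_lt hf x v (lt_add_of_pos_right _ (half_pos hε))
  have h2 := aux_lt hf x w (lt_add_of_pos_right _ (half_pos hε))
  have ht : Tendsto (fun p : X × ℝ => (p.1 + p.2 • v, p.2)) ((𝓝 x) ×ˢ (𝓝[>] (0 : ℝ)))
      ((𝓝 x) ×ˢ (𝓝[>] (0 : ℝ))) := (aux_tendsto x v).prodMk tendsto_snd
  filter_upwards [h1, ht.eventually h2] with p h3 h4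
  have : (f (p.1 + p.2 • (v + w)) - f p.1) / p.2 =
      (f (p.1 + p.2 • v + p.2 • w) - f (p.1 + p.2 • v)) / p.2
        + (f (p.1 + p.2 • v) - f p.1) / p.2 := by
    rw [smul_add, ← add_assoc]; ring
  rw [this]
  linarith

theorem aux_zero [NormedSpace ℝ X] (f : X → ℝ) (x : X) : clarkeDeriv f x 0 = 0 := by
  simp [clarkeDeriv]

theorem aux_smul_le [NormedSpace ℝ X] {f : X → ℝ} (hf : LocallyLipschitz f) (x v : X) {c : ℝ}
    (hc : 0 < c) : clarkeDeriv f x (c • v) ≤ c * clarkeDeriv f x v := by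
  rw [← div_le_iff₀' hc]
  refine le_of_forall_pos_le_add fun ε hε => ?_
  rw [div_le_iff₀' hc]
  apply aux_le hf
  have h1 := aux_lt hf x v (lt_add_of_pos_right _ hε)
  have ht0 : Tendsto (fun t : ℝ => c * t) (𝓝[>] (0 : ℝ)) (𝓝[>] (0 : ℝ)) := by
    refine tendsto_nhdsWithin_iff.2 ⟨?_, ?_⟩
    · have : Tendsto (fun t : ℝ => c * t) (𝓝 0) (𝓝 (c * 0)) := by
        apply Continuous.tendsto; fun_prop
      rw [mul_zero] at this
      exact this.mono_left nhdsWithin_le_nhds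
    · filter_upwards [self_mem_nhdsWithin] with t ht using mul_pos hc ht
  have ht : Tendsto (fun p : X × ℝ => (p.1, c * p.2)) ((𝓝 x) ×ˢ (𝓝[>] (0 : ℝ)))
      ((𝓝 x) ×ˢ (𝓝[>] (0 : ℝ))) := tendsto_fst.prodMk (ht0.comp tendsto_snd)
  filter_upwards [ht.eventually h1, aux_pos x] with p h3 h4
  rw [div_lt_iff₀ (mul_pos hc h4)] at h3
  rw [div_le_iff₀ h4, smul_smul, mul_comm p.2 c]
  linarith

theorem aux_smul [NormedSpace ℝ X] {f : X → ℝ} (hf : LocallyLipschitz f) (x v : X) {c : ℝ}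
    (hc : 0 < c) : clarkeDeriv f x (c • v) = c * clarkeDeriv f x v := by
  refine le_antisymm (aux_smul_le hf x v hc) ?_
  have := aux_smul_le hf x (c • v) (inv_pos.2 hc)
  rw [smul_smul, inv_mul_cancel₀ hc.ne', one_smul, ← div_eq_inv_mul, le_div_iff₀ hc] at this
  linarith

theorem aux_neg [NormedSpace ℝ X] {f : X → ℝ} (hf : LocallyLipschitz f) (x v : X) :
    0 ≤ clarkeDeriv f x v + clarkeDeriv f x (-v) := by
  have := aux_add hf x v (-v)
  rwa [add_neg_cancel, aux_zero] at this

theorem aux_HB [InnerProductSpace ℝ X] [FiniteDimensional ℝ X] {f : X → ℝ}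
    (hf : LocallyLipschitz f) (x : X)
    {C : ℝ} (hC : ∀ η ∈ clarkeSubdiffInner f x, ‖η‖ ≤ C) (v : X) :
    clarkeDeriv f x v ≤ C * ‖v‖ := by
  by_cases hv : v = 0
  · simp [hv, aux_zero]
  obtain ⟨g, hg1, hg2⟩ := exists_extension_of_le_sublinear
    (LinearPMap.mkSpanSingleton (σ := RingHom.id ℝ) v (clarkeDeriv f x v) hv) (clarkeDeriv f x)
    (fun c hc w => aux_smul hf x w hc) (aux_add hf x) (by
      rintro ⟨w, hw⟩
      obtain ⟨t, rfl⟩ := Submodule.mem_span_singleton.1 hw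
      rw [LinearPMap.mkSpanSingleton'_apply]
      simp only [RingHom.id_apply, smul_eq_mul]
      rcases lt_trichotomy t 0 with h | h | h
      · have h1 := aux_neg hf x (t • v)
        rw [← neg_smul, aux_smul hf x v (neg_pos.2 h)] at h1
        linarith
      · simp [h, aux_zero]
      · rw [aux_smul hf x v h])
  have hgv := hg1 ⟨v, Submodule.mem_span_singleton_self v⟩
  rw [LinearPMap.mkSpanSingleton_apply] at hgv
  simp only at hgv
  set η := (InnerProductSpace.toDual ℝ X).symm (LinearMap.toContinuousLinearMap g) with hη
  have hin : ∀ w, ⟪η, w⟫ = g w := fun w => by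
    rw [hη, InnerProductSpace.toDual_symm_apply]; rfl
  have := hC η (fun w => by rw [hin]; exact hg2 w)
  rw [← hgv, ← hin]
  exact (real_inner_le_norm _ _).trans (mul_le_mul_of_nonneg_right this (norm_nonneg _))

theorem aux_mvt [NormedSpace ℝ X] {f : X → ℝ} (hf : LocallyLipschitz f) {k₀ k₁ : ℝ}
    (hk₁ : 0 ≤ k₁) (h : ∀ x v, clarkeDeriv f x v ≤ (k₀ + k₁ * ‖x‖) * ‖v‖) {M : ℝ} {a b : X}
    (ha : ‖a‖ ≤ M) (hb : ‖b‖ ≤ M) : f b - f a ≤ (k₀ + k₁ * M) * ‖b - a‖ := by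
  refine le_of_forall_pos_le_add fun ε hε => ?_
  set v := b - a with hv
  set C := (k₀ + k₁ * M) * ‖v‖ with hC
  have key := image_le_of_liminf_slope_right_lt_deriv_boundary (f := fun t : ℝ => f (a + t • v))
    (f' := fun _ => C) (a := 0) (b := 1)
    (Continuous.continuousOn (hf.continuous.comp (by fun_prop))) (by
      intro t ht r hr
      have hM : ‖a + t • v‖ ≤ M := by
        have : a + t • v = (1 - t) • a + t • b := by rw [hv]; module
        rw [this]
        refine (norm_add_le _ _).trans ?_
        rw [norm_smul, norm_smul, Real.norm_eq_abs, Real.norm_eq_abs, abs_of_nonneg ht.1,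
          abs_of_nonneg (by linarith [ht.2] : (0:ℝ) ≤ 1 - t)]
        nlinarith [ht.1, ht.2]
      have h1 : clarkeDeriv f (a + t • v) v < r := by
        refine lt_of_le_of_lt ((h _ _).trans ?_) hr
        rw [hC]; gcongr
      have h2 := aux_lt hf _ _ h1
      have ht : Tendsto (fun z : ℝ => (a + t • v, z - t)) (𝓝[>] t)
          ((𝓝 (a + t • v)) ×ˢ (𝓝[>] (0:ℝ))) := by
        refine tendsto_const_nhds.prodMk (tendsto_nhdsWithin_iff.2 ⟨?_, ?_⟩)
        · have : Tendsto (fun z : ℝ => z - t) (𝓝 t) (𝓝 (t - t)) := by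
            apply Continuous.tendsto; fun_prop
          rw [sub_self] at this
          exact this.mono_left nhdsWithin_le_nhds
        · filter_upwards [self_mem_nhdsWithin] with z hz using Set.mem_Ioi.2 (sub_pos.2 (Set.mem_Ioi.1 hz))
      refine Eventually.frequently ?_
      filter_upwards [ht.eventually h2] with z hz
      rw [slope_def_field]
      have e : a + t • v + (z - t) • v = a + z • v := by module
      rwa [e] at hz)
    (B := fun t => f a + (C + ε) * t) (B' := fun _ => C + ε) (by simp)
    (fun t => by simpa using ((hasDerivAt_id t).const_mul (C + ε)).const_add (f a))
    (fun t _ _ => by linarith) (Set.right_mem_Icc.2 zero_le_one)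
  simp only [one_smul, hv, add_sub_cancel, mul_one] at key
  linarith

theorem aux_mvt_abs [NormedSpace ℝ X] {f : X → ℝ} (hf : LocallyLipschitz f) {k₀ k₁ : ℝ}
    (hk₁ : 0 ≤ k₁) (h : ∀ x v, clarkeDeriv f x v ≤ (k₀ + k₁ * ‖x‖) * ‖v‖) {M : ℝ} {a b : X}
    (ha : ‖a‖ ≤ M) (hb : ‖b‖ ≤ M) : |f b - f a| ≤ (k₀ + k₁ * M) * ‖b - a‖ := by
  rw [abs_le]
  have h1 := aux_mvt hf hk₁ h ha hb
  have h2 := aux_mvt hf hk₁ h hb ha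
  rw [norm_sub_rev] at h2
  constructor <;> linarith

end Aux

section Aux2

theorem aux_cs {E Γ : Type*} [NormedAddCommGroup E] [MeasurableSpace Γ] {μ : Measure Γ}
    (w v : Lp E 2 μ) : Integrable (fun x => ‖w x‖ * ‖v x‖) μ ∧
      ∫ x, ‖w x‖ * ‖v x‖ ∂μ ≤ ‖w‖ * ‖v‖ := by
  have hw := (Lp.memLp w).norm
  have hv := (Lp.memLp v).norm
  refine ⟨hw.integrable_mul hv, ?_⟩
  have h := real_inner_le_norm (hw.toLp _) (hv.toLp _)
  rw [Lp.norm_toLp, Lp.norm_toLp, eLpNorm_norm, eLpNorm_norm, ← Lp.norm_def, ← Lp.norm_def,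
    L2.inner_def] at h
  refine le_trans (le_of_eq ?_) h
  apply integral_congr_ae
  filter_upwards [hw.coeFn_toLp, hv.coeFn_toLp] with x h1 h2
  rw [h1, h2]
  simp [mul_comm]

theorem aux_int3 {Γ : Type*} [MeasurableSpace Γ] {μ : Measure Γ} {f g h : Γ → ℝ}
    (hf : Integrable f μ) (hg : Integrable g μ) (hh : Integrable h μ) :
    ∫ x, (f x + g x + h x) ∂μ = ∫ x, f x ∂μ + ∫ x, g x ∂μ + ∫ x, h x ∂μ := by
  rw [← integral_add hf hg]
  exact integral_add (hf.add hg) hh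

theorem aux_meas {E Γ : Type*} [NormedAddCommGroup E] [SecondCountableTopology E]
    [MeasurableSpace E] [BorelSpace E] [MeasurableSpace Γ] {μ : Measure Γ}
    {j : Γ → E → ℝ} (hmeas : ∀ ξ : E, Measurable (fun x => j x ξ))
    (hc : ∀ᵐ x ∂μ, Continuous (j x)) {w : Γ → E} (hw : AEStronglyMeasurable w μ) :
    AEStronglyMeasurable (fun x => j x (w x)) μ := by
  obtain ⟨N, hN, hNm, hN0⟩ := exists_measurable_superset_of_null (ae_iff.1 hc)
  have hm : Measurable (Function.uncurry fun (ξ : E) (x : Γ) => Nᶜ.indicator (fun x => j x ξ) x) := by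
    apply measurable_uncurry_of_continuous_of_measurable
    · intro x
      by_cases hx : x ∈ N
      · simp [hx, continuous_const]
      · have : Continuous (j x) := by
          by_contra h
          exact hx (hN h)
        simpa [hx] using this
    · intro ξ
      exact (hmeas ξ).indicator hNm.compl
  have h2 : AEMeasurable (fun x => (Function.uncurry fun (ξ : E) (x : Γ) =>
      Nᶜ.indicator (fun x => j x ξ) x) (w x, x)) μ :=
    hm.comp_aemeasurable (hw.aemeasurable.prodMk aemeasurable_id)
  refine AEStronglyMeasurable.congr h2.aestronglyMeasurable ?_
  have : ∀ᵐ x ∂μ, x ∉ N := measure_eq_zero_iff_ae_notMem.1 hN0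
  filter_upwards [this] with x hx
  simp [Function.uncurry, hx]

theorem aux_main {E Γ : Type*} [NormedAddCommGroup E] [NormedSpace ℝ E] [SecondCountableTopology E]
    [MeasurableSpace E] [BorelSpace E] [MeasurableSpace Γ] {μ : Measure Γ} [IsFiniteMeasure μ]
    {j : Γ → E → ℝ} (hmeas : ∀ ξ : E, Measurable (fun x => j x ξ))
    (hint0 : Integrable (fun x => j x 0) μ)
    (hlip : ∀ᵐ x ∂μ, LocallyLipschitz (j x))
    {k₀ k₁ : ℝ} (hk₀ : 0 ≤ k₀) (hk₁ : 0 ≤ k₁)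
    (hD : ∀ᵐ x ∂μ, ∀ ξ v, clarkeDeriv (j x) ξ v ≤ (k₀ + k₁ * ‖ξ‖) * ‖v‖)
    (u v : Lp E 2 μ)
    (hmeas' : Measurable (fun x => clarkeDeriv (j x) (u x) (v x))) :
    clarkeDeriv (fun w : Lp E 2 μ => ∫ x, j x (w x) ∂μ) u v ≤
      ∫ x, clarkeDeriv (j x) (u x) (v x) ∂μ := by
  have hcont : ∀ᵐ x ∂μ, Continuous (j x) := hlip.mono fun x hx => hx.continuous
  have hn : ∀ w : Lp E 2 μ, Integrable (fun x => ‖w x‖) μ := fun w =>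
    ((Lp.memLp w).integrable one_le_two).norm
  -- integrability of the composition
  have hJ : ∀ w : Lp E 2 μ, Integrable (fun x => j x (w x)) μ := by
    intro w
    have hb : Integrable (fun x => ‖j x 0‖ + (k₀ * ‖w x‖ + k₁ * (‖w x‖ * ‖w x‖))) μ :=
      hint0.norm.add (((hn w).const_mul _).add ((aux_cs w w).1.const_mul _))
    refine hb.mono' (aux_meas hmeas hcont (Lp.aestronglyMeasurable w)) ?_
    filter_upwards [hlip, hD] with x h1 h2
    have := aux_mvt_abs h1 hk₁ h2 (M := ‖w x‖) (a := 0) (b := w x) (by simp) le_rfl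
    rw [sub_zero] at this
    have h3 := abs_sub_abs_le_abs_sub (j x (w x)) (j x 0)
    simp only [Real.norm_eq_abs]
    nlinarith
  set q : Lp E 2 μ × ℝ → Γ → ℝ :=
    fun p x => (j x (p.1 x + p.2 • v x) - j x (p.1 x)) / p.2 with hq
  have hqe : ∀ p : Lp E 2 μ × ℝ,
      (fun x => (j x ((p.1 + p.2 • v : Lp E 2 μ) x) - j x (p.1 x)) / p.2) =ᵐ[μ] q p := by
    intro p
    filter_upwards [Lp.coeFn_add p.1 (p.2 • v), Lp.coeFn_smul p.2 v] with x h1 h2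
    rw [h1, Pi.add_apply, h2, Pi.smul_apply]
  have hqi : ∀ p, Integrable (q p) μ := fun p =>
    (((hJ _).sub (hJ _)).div_const _).congr (hqe p)
  have hqJ : ∀ p : Lp E 2 μ × ℝ,
      (∫ x, j x ((p.1 + p.2 • v : Lp E 2 μ) x) ∂μ - ∫ x, j x (p.1 x) ∂μ) / p.2
        = ∫ x, q p x ∂μ := by
    intro p
    rw [← integral_congr_ae (hqe p), integral_div, integral_sub (hJ _) (hJ _)]
  have hqb : ∀ᵐ x ∂μ, ∀ p : Lp E 2 μ × ℝ, 0 < p.2 → p.2 ≤ 1 →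
      |q p x| ≤ (k₀ + k₁ * (‖p.1 x‖ + ‖v x‖)) * ‖v x‖ := by
    filter_upwards [hlip, hD] with x h1 h2 p hp hp1
    have hs : ‖p.2 • v x‖ = p.2 * ‖v x‖ := by
      rw [norm_smul, Real.norm_eq_abs, abs_of_pos hp]
    have h3 := aux_mvt_abs h1 hk₁ h2 (M := ‖p.1 x‖ + ‖v x‖) (a := p.1 x)
      (b := p.1 x + p.2 • v x) (by linarith [norm_nonneg (v x)])
      ((norm_add_le _ _).trans (by rw [hs]; nlinarith [norm_nonneg (v x)]))
    rw [add_sub_cancel_left, hs] at h3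
    rw [hq]
    simp only
    rw [abs_div, abs_of_pos hp, div_le_iff₀ hp]
    linarith
  have hle1 : ∀ᶠ p : Lp E 2 μ × ℝ in (𝓝 u) ×ˢ (𝓝[>] (0:ℝ)), p.2 ≤ 1 :=
    (tendsto_snd (f := 𝓝 u)).eventually
      (nhdsWithin_le_nhds (Iic_mem_nhds (zero_lt_one : (0:ℝ) < 1)))
  have hcob : IsCoboundedUnder (· ≤ ·) ((𝓝 u) ×ˢ (𝓝[>] (0:ℝ)))
      (fun p : Lp E 2 μ × ℝ => ∫ x, q p x ∂μ) := by
    have hle : ∀ᶠ p : Lp E 2 μ × ℝ in (𝓝 u) ×ˢ (𝓝[>] (0:ℝ)), ‖p.1‖ ≤ ‖u‖ + 1 :=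
      (tendsto_fst (g := 𝓝[>] (0:ℝ))).eventually
        ((continuous_norm.tendsto u).eventually (Iic_mem_nhds (lt_add_one ‖u‖)))
    have : IsBoundedUnder (· ≥ ·) ((𝓝 u) ×ˢ (𝓝[>] (0:ℝ)))
        (fun p : Lp E 2 μ × ℝ => ∫ x, q p x ∂μ) := by
      refine isBoundedUnder_of_eventually_ge (a := -(k₀ * ∫ x, ‖v x‖ ∂μ +
        k₁ * ((‖u‖ + 1) * ‖v‖) + k₁ * (‖v‖ * ‖v‖))) ?_
      filter_upwards [hle, aux_pos u, hle1] with p h1 h2 h3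
      have hi1 := (hn v).const_mul k₀
      have hi2 := (aux_cs p.1 v).1.const_mul k₁
      have hi3 := (aux_cs v v).1.const_mul k₁
      have h4 : ∫ x, -q p x ∂μ ≤ ∫ x, (k₀ * ‖v x‖ + k₁ * (‖p.1 x‖ * ‖v x‖)
          + k₁ * (‖v x‖ * ‖v x‖)) ∂μ := by
        refine integral_mono_ae (hqi p).neg ((hi1.add hi2).add hi3) ?_
        filter_upwards [hqb] with x hx
        have := (abs_le.1 (hx p h2 h3)).1
        linarith
      rw [integral_neg, aux_int3 hi1 hi2 hi3,
        integral_const_mul, integral_const_mul, integral_const_mul] at h4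
      have h5 : k₁ * ∫ x, ‖p.1 x‖ * ‖v x‖ ∂μ ≤ k₁ * ((‖u‖ + 1) * ‖v‖) := by
        refine mul_le_mul_of_nonneg_left ((aux_cs p.1 v).2.trans ?_) hk₁
        gcongr
      have h6 : k₁ * ∫ x, ‖v x‖ * ‖v x‖ ∂μ ≤ k₁ * (‖v‖ * ‖v‖) :=
        mul_le_mul_of_nonneg_left (aux_cs v v).2 hk₁
      linarith
    exact this.isCoboundedUnder_le
  -- integrability of the pointwise derivative
  set D : Γ → ℝ := fun x => clarkeDeriv (j x) (u x) (v x) with hDdef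
  set G : Γ → ℝ := fun x => k₀ * ‖v x‖ + k₁ * (‖u x‖ * ‖v x‖) + k₁ * (‖v x‖ * ‖v x‖) with hG
  have hGi : Integrable G μ := (((hn v).const_mul k₀).add ((aux_cs u v).1.const_mul k₁)).add
    ((aux_cs v v).1.const_mul k₁)
  have hDG : ∀ᵐ x ∂μ, |D x| ≤ G x := by
    filter_upwards [hlip, hD] with x h1 h2
    have h3 := h2 (u x) (v x)
    have h4 := h2 (u x) (-v x)
    have h5 := aux_neg h1 (u x) (v x)
    rw [norm_neg] at h4
    have h6 : 0 ≤ k₁ * (‖v x‖ * ‖v x‖) := by positivity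
    simp only [hDdef, hG]
    rw [abs_le]
    constructor <;> linarith
  have hDi : Integrable D μ := hGi.mono' hmeas'.aestronglyMeasurable hDG
  -- contradiction
  have hdef : clarkeDeriv (fun w : Lp E 2 μ => ∫ x, j x (w x) ∂μ) u v =
      limsup (fun p : Lp E 2 μ × ℝ => ∫ x, q p x ∂μ) ((𝓝 u) ×ˢ (𝓝[>] (0:ℝ))) := by
    unfold clarkeDeriv
    congr 1
    funext p
    exact hqJ p
  rw [hdef]
  refine le_of_forall_lt_imp_le_of_dense fun c hc => ?_
  have hfr := (frequently_lt_of_lt_limsup hcob hc).and_eventually ((aux_pos u).and hle1)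
  obtain ⟨p, hpt, hp⟩ := exists_seq_forall_of_frequently hfr
  have hp1 : Tendsto (fun n => (p n).1) atTop (𝓝 u) := tendsto_fst.comp hpt
  have hp2 : Tendsto (fun n => (p n).2) atTop (𝓝[>] (0:ℝ)) := tendsto_snd.comp hpt
  obtain ⟨ns, hns, hae⟩ := (tendstoInMeasure_of_tendsto_Lp hp1).exists_seq_tendsto_ae
  set h : ℕ → Γ → ℝ := fun n x =>
    max (q (p (ns n)) x - k₁ * (‖((p (ns n)).1 - u : Lp E 2 μ) x‖ * ‖v x‖) - D x) 0 with hh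
  have hri : ∀ n, Integrable (fun x => k₁ * (‖((p (ns n)).1 - u : Lp E 2 μ) x‖ * ‖v x‖)) μ :=
    fun n => (aux_cs _ v).1.const_mul k₁
  have hhi : ∀ n, Integrable (h n) μ := fun n =>
    (((hqi _).sub (hri n)).sub hDi).sup (integrable_zero _ _ _)
  have hlim : Tendsto (fun n => ∫ x, h n x ∂μ) atTop (𝓝 (∫ _, (0:ℝ) ∂μ)) := by
    refine tendsto_integral_of_dominated_convergence (fun x => 2 * G x)
      (fun n => (hhi n).aestronglyMeasurable) (hGi.const_mul 2) ?_ ?_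
    · intro n
      filter_upwards [hqb, hDG, Lp.coeFn_sub (p (ns n)).1 u] with x h1 h2 h3
      have h4 := (abs_le.1 (h1 _ (hp (ns n)).2.1 (hp (ns n)).2.2)).2
      have h5 := abs_le.1 h2
      rw [Real.norm_eq_abs, abs_of_nonneg (le_max_right _ _)]
      refine max_le ?_ (by linarith)
      rw [h3, Pi.sub_apply]
      have h6 : ‖(p (ns n)).1 x‖ ≤ ‖u x‖ + ‖(p (ns n)).1 x - u x‖ := by
        have := norm_add_le (u x) ((p (ns n)).1 x - u x)
        rwa [add_sub_cancel] at this
      have h7 : k₁ * (‖(p (ns n)).1 x‖ * ‖v x‖) ≤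
          k₁ * ((‖u x‖ + ‖(p (ns n)).1 x - u x‖) * ‖v x‖) := by gcongr
      have h8 : G x = k₀ * ‖v x‖ + k₁ * (‖u x‖ * ‖v x‖) + k₁ * (‖v x‖ * ‖v x‖) := rfl
      linarith
    · filter_upwards [hlip, hae] with x h1 h2
      rw [tendsto_order]
      refine ⟨fun a ha => Eventually.of_forall fun n => lt_of_lt_of_le ha (le_max_right _ _),
        fun a ha => ?_⟩
      have h3 := aux_lt h1 (u x) (v x) (c := D x + a) (lt_add_of_pos_right _ ha)
      have h4 : Tendsto (fun n => ((p (ns n)).1 x, (p (ns n)).2)) atTop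
          ((𝓝 (u x)) ×ˢ (𝓝[>] (0:ℝ))) := h2.prodMk (hp2.comp hns.tendsto_atTop)
      filter_upwards [h4.eventually h3] with n hn'
      refine max_lt ?_ ha
      have h5 : 0 ≤ k₁ * (‖((p (ns n)).1 - u : Lp E 2 μ) x‖ * ‖v x‖) := by positivity
      have h6 : q (p (ns n)) x < D x + a := hn'
      linarith
  rw [integral_zero] at hlim
  have hlim2 : Tendsto (fun n => k₁ * (‖(p (ns n)).1 - u‖ * ‖v‖)) atTop (𝓝 0) := by
    have h1 := (tendsto_iff_norm_sub_tendsto_zero.1 hp1).comp hns.tendsto_atTop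
    have h2 := (h1.mul_const ‖v‖).const_mul k₁
    simpa using h2
  have hlim3 : Tendsto (fun n => ∫ x, D x ∂μ + ∫ x, h n x ∂μ +
      k₁ * (‖(p (ns n)).1 - u‖ * ‖v‖)) atTop (𝓝 (∫ x, D x ∂μ)) := by
    simpa using (hlim.const_add (∫ x, D x ∂μ)).add hlim2
  refine ge_of_tendsto' hlim3 fun n => ?_
  refine (hp (ns n)).1.le.trans ?_
  have h1 : ∫ x, q (p (ns n)) x ∂μ ≤ ∫ x, (D x + h n x +
      k₁ * (‖((p (ns n)).1 - u : Lp E 2 μ) x‖ * ‖v x‖)) ∂μ := by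
    refine integral_mono (hqi _) ((hDi.add (hhi n)).add (hri n)) fun x => ?_
    have := le_max_left
      (q (p (ns n)) x - k₁ * (‖((p (ns n)).1 - u : Lp E 2 μ) x‖ * ‖v x‖) - D x) 0
    simp only [hh]
    linarith
  rw [aux_int3 hDi (hhi n) (hri n), integral_const_mul] at h1
  have h2 := mul_le_mul_of_nonneg_left (aux_cs ((p (ns n)).1 - u) v).2 hk₁
  linarith

end Aux2

/-- Under (H1)–(H3), the Clarke directional derivative of the integral functional
`J(v) = ∫ j(x, v(x)) dμ` on `L²(Γ, μ; ℝ^d)` is dominated by the integral of the pointwise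
Clarke directional derivatives: `J⁰(u; v) ≤ ∫ j⁰(x, u(x); v(x)) dμ`. -/
theorem clarkeDeriv_integral_functional_le {d : ℕ}
    {Γ : Type*} [MeasurableSpace Γ] (μ : Measure Γ) [IsFiniteMeasure μ]
    (j : Γ → EuclideanSpace ℝ (Fin d) → ℝ)
    (hmeas : ∀ ξ : EuclideanSpace ℝ (Fin d), Measurable (fun x => j x ξ))
    (hint0 : Integrable (fun x => j x 0) μ)
    (hlip : ∀ᵐ x ∂μ, LocallyLipschitz (j x))
    (k₀ k₁ : ℝ) (hk₀ : 0 ≤ k₀) (hk₁ : 0 ≤ k₁)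
    (hgrowth : ∀ᵐ x ∂μ, ∀ ξ : EuclideanSpace ℝ (Fin d),
      ∀ η ∈ clarkeSubdiffInner (j x) ξ, ‖η‖ ≤ k₀ + k₁ * ‖ξ‖)
    (u v : Lp (EuclideanSpace ℝ (Fin d)) 2 μ)
    (hmeas' : Measurable (fun x => clarkeDeriv (j x) (u x) (v x))) :
    clarkeDeriv (fun w : Lp (EuclideanSpace ℝ (Fin d)) 2 μ => ∫ x, j x (w x) ∂μ) u v ≤
      ∫ x, clarkeDeriv (j x) (u x) (v x) ∂μ := by
  refine aux_main hmeas hint0 hlip hk₀ hk₁ ?_ u v hmeas'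
  filter_upwards [hlip, hgrowth] with x h1 h2 ξ w
  exact aux_HB h1 ξ (h2 ξ) w
end

section
/- Let (Γ, μ) be a finite measure space and let j : Γ × ℝ^d → ℝ satisfy: (H1) for every ξ ∈ ℝ^d the map x ↦ j(x, ξ) is measurable and j(·, 0) ∈ L¹(Γ, μ); (H2) for μ-a.e. x ∈ Γ the map ξ ↦ j(x, ξ) is locally Lipschitz on ℝ^d; (H3) there exist k₀, k₁ ≥ 0 such that for μ-a.e. x and all ξ ∈ ℝ^d, every η ∈ ∂j(x, ξ) satisfies |η| ≤ k₀ + k₁|ξ|; and (H4) there exists δ₁ ≥ 0 such that for μ-a.e. x and all ξ₁, ξ₂ ∈ ℝ^d, η₁ ∈ ∂j(x, ξ₁), η₂ ∈ ∂j(x, ξ₂), one has (η₁ − η₂)·(ξ₁ − ξ₂) ≥ −δ₁|ξ₁ − ξ₂|². Define J(v) := ∫_Γ j(x, v(x)) dμ(x) for v ∈ L²(Γ, μ; ℝ^d), and assume for every u, v ∈ L²(Γ, μ; ℝ^d) the map x ↦ j⁰(x, u(x); v(x)) is measurable. Then for all u₁, u₂ ∈ L²(Γ, μ; ℝ^d)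 and all z₁ ∈ ∂J(u₁), z₂ ∈ ∂J(u₂), one has (z₁ − z₂, u₁ − u₂)_{L²} ≥ −δ₁ ‖u₁ − u₂‖_{L²}². -/
open Filter Topology MeasureTheory
open scoped RealInnerProductSpace

section helpers

variable {X : Type*} [NormedAddCommGroup X] [NormedSpace ℝ X]

lemma cd_bounded {f : X → ℝ} (hf : LocallyLipschitz f) (x v : X) :
    ∃ C : ℝ, ∀ᶠ p : X × ℝ in (𝓝 x) ×ˢ (𝓝[>] (0 : ℝ)),
      |(f (p.1 + p.2 • v) - f p.1) / p.2| ≤ C := by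
  obtain ⟨K, t, ht, hK⟩ := hf x
  refine ⟨K * ‖v‖, ?_⟩
  have h1 : ∀ᶠ p : X × ℝ in (𝓝 x) ×ˢ (𝓝[>] (0 : ℝ)), p.1 ∈ t :=
    tendsto_fst.eventually ht
  have hpos : ∀ᶠ p : X × ℝ in (𝓝 x) ×ˢ (𝓝[>] (0 : ℝ)), 0 < p.2 :=
    tendsto_snd.eventually self_mem_nhdsWithin
  have h2 : ∀ᶠ p : X × ℝ in (𝓝 x) ×ˢ (𝓝[>] (0 : ℝ)), p.1 + p.2 • v ∈ t := by
    have : Tendsto (fun p : X × ℝ => p.1 + p.2 • v) ((𝓝 x) ×ˢ (𝓝 (0 : ℝ))) (𝓝 (x + (0:ℝ) • v)) := by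
      rw [← nhds_prod_eq]
      exact Continuous.tendsto (by fun_prop) (x, (0:ℝ))
    rw [zero_smul, add_zero] at this
    exact (this.mono_left (Filter.prod_mono le_rfl nhdsWithin_le_nhds)).eventually ht
  filter_upwards [h1, hpos, h2] with p h1 hp h2
  rw [abs_div, abs_of_pos hp, div_le_iff₀ hp]
  have := hK.dist_le_mul _ h2 _ h1
  rw [Real.dist_eq, dist_eq_norm, add_sub_cancel_left, norm_smul, Real.norm_eq_abs,
    abs_of_pos hp] at this
  linarith

lemma cd_lt {f : X → ℝ} (hf : LocallyLipschitz f) {x v : X} {a : ℝ}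
    (h : clarkeDeriv f x v < a) :
    ∀ᶠ p : X × ℝ in (𝓝 x) ×ˢ (𝓝[>] (0 : ℝ)), (f (p.1 + p.2 • v) - f p.1) / p.2 < a := by
  obtain ⟨C, hC⟩ := cd_bounded hf x v
  refine eventually_lt_of_limsup_lt h ?_
  exact isBoundedUnder_of_eventually_le (hC.mono fun p hp => (abs_le.1 hp).2)

lemma cd_le_of_bound {f : X → ℝ} {x v : X} {a C : ℝ}
    (hC : ∀ᶠ p : X × ℝ in (𝓝 x) ×ˢ (𝓝[>] (0 : ℝ)), C ≤ (f (p.1 + p.2 • v) - f p.1) / p.2)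
    (h : ∀ᶠ p : X × ℝ in (𝓝 x) ×ˢ (𝓝[>] (0 : ℝ)), (f (p.1 + p.2 • v) - f p.1) / p.2 ≤ a) :
    clarkeDeriv f x v ≤ a := by
  refine limsup_le_of_le ?_ h
  exact (isBoundedUnder_of_eventually_ge hC).isCoboundedUnder_le

lemma cd_le {f : X → ℝ} (hf : LocallyLipschitz f) {x v : X} {a : ℝ}
    (h : ∀ᶠ p : X × ℝ in (𝓝 x) ×ˢ (𝓝[>] (0 : ℝ)), (f (p.1 + p.2 • v) - f p.1) / p.2 ≤ a) :
    clarkeDeriv f x v ≤ a := by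
  obtain ⟨C, hC⟩ := cd_bounded hf x v
  exact cd_le_of_bound (hC.mono fun p hp => (abs_le.1 hp).1) h

lemma cd_add {f : X → ℝ} (hf : LocallyLipschitz f) (x v w : X) :
    clarkeDeriv f x (v + w) ≤ clarkeDeriv f x v + clarkeDeriv f x w := by
  refine le_of_forall_pos_le_add fun ε hε => ?_
  have h1 := cd_lt hf (x := x) (v := v) (a := clarkeDeriv f x v + ε / 2) (by linarith)
  have h2 := cd_lt hf (x := x) (v := w) (a := clarkeDeriv f x w + ε / 2) (by linarith)
  have ht : Tendsto (fun p : X × ℝ => (p.1 + p.2 • w, p.2)) ((𝓝 x) ×ˢ (𝓝[>] (0 : ℝ)))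
      ((𝓝 x) ×ˢ (𝓝[>] (0 : ℝ))) := by
    refine Tendsto.prodMk ?_ tendsto_snd
    have : Tendsto (fun p : X × ℝ => p.1 + p.2 • w) ((𝓝 x) ×ˢ (𝓝 (0 : ℝ))) (𝓝 (x + (0:ℝ) • w)) := by
      rw [← nhds_prod_eq]
      exact Continuous.tendsto (by fun_prop) (x, (0:ℝ))
    rw [zero_smul, add_zero] at this
    exact this.mono_left (Filter.prod_mono le_rfl nhdsWithin_le_nhds)
  refine cd_le hf ?_
  filter_upwards [ht.eventually h1, h2] with p h1 h2
  have e : p.1 + p.2 • (v + w) = p.1 + p.2 • w + p.2 • v := by rw [smul_add]; abel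
  rw [e]
  have : (f (p.1 + p.2 • w + p.2 • v) - f p.1) / p.2 =
    (f (p.1 + p.2 • w + p.2 • v) - f (p.1 + p.2 • w)) / p.2 + (f (p.1 + p.2 • w) - f p.1) / p.2 := by
    ring
  rw [this]
  linarith

lemma cd_smul_le {f : X → ℝ} (hf : LocallyLipschitz f) (x v : X) {c : ℝ} (hc : 0 < c) :
    clarkeDeriv f x (c • v) ≤ c * clarkeDeriv f x v := by
  refine le_of_forall_pos_le_add fun ε hε => ?_
  have h1 := cd_lt hf (x := x) (v := v) (a := clarkeDeriv f x v + ε / c)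
    (by have := div_pos hε hc; linarith)
  have ht : Tendsto (fun p : X × ℝ => (p.1, c * p.2)) ((𝓝 x) ×ˢ (𝓝[>] (0 : ℝ)))
      ((𝓝 x) ×ˢ (𝓝[>] (0 : ℝ))) := by
    refine Tendsto.prodMk tendsto_fst ?_
    refine Tendsto.comp (g := fun t : ℝ => c * t) (y := 𝓝[>] (0 : ℝ)) ?_ tendsto_snd
    refine tendsto_nhdsWithin_iff.2 ⟨?_, ?_⟩
    · have : Tendsto (fun t : ℝ => c * t) (𝓝 0) (𝓝 (c * 0)) :=
        Continuous.tendsto (by fun_prop) 0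
      rw [mul_zero] at this
      exact this.mono_left nhdsWithin_le_nhds
    · filter_upwards [self_mem_nhdsWithin] with t ht
      exact mul_pos hc ht
  have hpos : ∀ᶠ p : X × ℝ in (𝓝 x) ×ˢ (𝓝[>] (0 : ℝ)), 0 < p.2 :=
    tendsto_snd.eventually self_mem_nhdsWithin
  refine cd_le hf ?_
  filter_upwards [ht.eventually h1, hpos] with p h1 hp
  rw [mul_comm c p.2, mul_smul] at h1
  have : (f (p.1 + p.2 • c • v) - f p.1) / p.2 =
    c * ((f (p.1 + p.2 • c • v) - f p.1) / (p.2 * c)) := by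
    field_simp
  rw [this]
  have h3 := mul_le_mul_of_nonneg_left h1.le hc.le
  have h4 : c * (clarkeDeriv f x v + ε / c) = c * clarkeDeriv f x v + ε := by field_simp
  linarith

lemma cd_smul {f : X → ℝ} (hf : LocallyLipschitz f) (x v : X) {c : ℝ} (hc : 0 < c) :
    clarkeDeriv f x (c • v) = c * clarkeDeriv f x v := by
  refine le_antisymm (cd_smul_le hf x v hc) ?_
  have := cd_smul_le hf x (c • v) (inv_pos.2 hc)
  rw [smul_smul, inv_mul_cancel₀ hc.ne', one_smul] at this
  have h2 := mul_le_mul_of_nonneg_left this hc.le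
  rwa [← mul_assoc, mul_inv_cancel₀ hc.ne', one_mul] at h2

lemma cd_zero (f : X → ℝ) (x : X) : clarkeDeriv f x 0 = 0 := by
  simp [clarkeDeriv]

/-- mean value along a line -/
lemma cd_mvt {f : X → ℝ} (hf : LocallyLipschitz f) (x v : X) {a b : ℝ} (hab : a ≤ b)
    {c e : ℝ} (h : ∀ t ∈ Set.Ico a b, clarkeDeriv f (x + t • v) v ≤ c - e * t) :
    f (x + b • v) ≤ f (x + a • v) + (c * b - e / 2 * b ^ 2) - (c * a - e / 2 * a ^ 2) := by
  have hcont : Continuous (fun t : ℝ => f (x + t • v)) :=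
    hf.continuous.comp (by fun_prop)
  have := image_le_of_liminf_slope_right_le_deriv_boundary (f := fun t : ℝ => f (x + t • v))
    (a := a) (b := b) hcont.continuousOn
    (B := fun t => f (x + a • v) + (c * t - e / 2 * t ^ 2) - (c * a - e / 2 * a ^ 2))
    (B' := fun t => c - e * t) (by simp) (by fun_prop) ?_ ?_ (Set.right_mem_Icc.2 hab)
  · exact this
  · intro t _
    apply HasDerivAt.hasDerivWithinAt
    have h1 : HasDerivAt (fun s : ℝ => c * s - e / 2 * s ^ 2) (c - e * t) t := by
      have h1 := ((hasDerivAt_id' t).const_mul c).fun_sub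
        (((hasDerivAt_id' t).fun_pow 2).const_mul (e / 2))
      exact h1.congr_deriv (by norm_num; ring)
    exact (h1.const_add (f (x + a • v))).sub_const (c * a - e / 2 * a ^ 2)
  · intro t ht r hr
    have h1 := cd_lt hf (lt_of_le_of_lt (h t ht) hr)
    have ht : Tendsto (fun z : ℝ => (x + t • v, z - t)) (𝓝[>] t)
        ((𝓝 (x + t • v)) ×ˢ (𝓝[>] (0 : ℝ))) := by
      refine Tendsto.prodMk tendsto_const_nhds ?_
      refine tendsto_nhdsWithin_iff.2 ⟨?_, ?_⟩
      · have : Tendsto (fun z : ℝ => z - t) (𝓝 t) (𝓝 (t - t)) :=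
          Continuous.tendsto (by fun_prop) t
        rw [sub_self] at this
        exact this.mono_left nhdsWithin_le_nhds
      · filter_upwards [self_mem_nhdsWithin] with z hz
        exact sub_pos.2 (Set.mem_Ioi.1 hz)
    refine Eventually.frequently ?_
    filter_upwards [ht.eventually h1] with z hz
    have e1 : x + t • v + (z - t) • v = x + z • v := by rw [sub_smul]; abel
    rw [e1] at hz
    rw [slope_def_field]
    exact hz

lemma semiconvex_of {f : X → ℝ} (hf : LocallyLipschitz f) {δ : ℝ}
    (h : ∀ x y : X, clarkeDeriv f x (y - x) + clarkeDeriv f y (x - y) ≤ δ * ‖x - y‖ ^ 2)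
    (x v : X) {l : ℝ} (h0 : 0 ≤ l) (h1 : l ≤ 1) :
    f (x + l • v) ≤ (1 - l) * f x + l * f (x + v) + δ / 2 * (l * (1 - l)) * ‖v‖ ^ 2 := by
  rcases h0.eq_or_lt with rfl | h0
  · simp
  rcases h1.eq_or_lt with rfl | h1
  · simp
  by_contra! hcon
  set D := δ * ‖v‖ ^ 2 with hD
  set A := f x
  set B := f (x + l • v)
  set C := f (x + v)
  -- slopes
  set S1 := (B + D / 2 * l ^ 2 - A) / l with hS1
  set S2 := (C + D / 2 - B - D / 2 * l ^ 2) / (1 - l) with hS2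
  have hl : 0 < 1 - l := by linarith
  have hS : S2 < S1 := by
    rw [hS1, hS2, div_lt_div_iff₀ hl h0]
    nlinarith
  set c := (S1 + S2) / 2 with hc
  have hc1 : c * l < B + D / 2 * l ^ 2 - A := by
    rw [← lt_div_iff₀ h0]; linarith
  have hc2 : C + D / 2 - B - D / 2 * l ^ 2 < c * (1 - l) := by
    rw [← div_lt_iff₀ hl]; linarith
  have ht : ∃ t ∈ Set.Ico 0 l, c - D * t < clarkeDeriv f (x + t • v) v := by
    by_contra! hn
    have := cd_mvt hf x v h0.le hn
    simp only [zero_smul, add_zero] at this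
    change B ≤ A + _ - _ at this
    nlinarith
  have hs : ∃ s ∈ Set.Ioc l 1, -c + D * s < clarkeDeriv f (x + s • v) (-v) := by
    by_contra! hn
    have := cd_mvt hf (x + v) (-v) (a := 0) (b := 1 - l) (c := -c + D) (e := D) hl.le (by
      intro t ht
      have := hn (1 - t) ⟨by linarith [ht.2], by linarith [ht.1]⟩
      have e1 : x + v + t • (-v) = x + (1 - t) • v := by
        rw [sub_smul, one_smul, smul_neg]; abel
      rw [e1]
      linarith)
    have e1 : x + v + (1 - l) • (-v) = x + l • v := by
        rw [sub_smul, one_smul, smul_neg]; abel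
    simp only [zero_smul, add_zero, e1] at this
    change B ≤ C + _ - _ at this
    nlinarith
  obtain ⟨t, ht, ht'⟩ := ht
  obtain ⟨s, hs, hs'⟩ := hs
  have hts : 0 < s - t := by linarith [ht.2, hs.1]
  have := h (x + t • v) (x + s • v)
  have e1 : x + s • v - (x + t • v) = (s - t) • v := by rw [sub_smul]; abel
  have e2 : x + t • v - (x + s • v) = (s - t) • (-v) := by rw [sub_smul, smul_neg, smul_neg]; abel
  rw [e1, e2, cd_smul hf _ _ hts, cd_smul hf _ _ hts, norm_smul, norm_neg, Real.norm_eq_abs,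
    abs_of_pos hts] at this
  have h3 : (s - t) * (clarkeDeriv f (x + t • v) v + clarkeDeriv f (x + s • v) (-v)) ≤
    (s - t) * (D * (s - t)) := by
    rw [hD]; nlinarith
  have h4 := le_of_mul_le_mul_left h3 hts
  nlinarith

lemma growth_of {f : X → ℝ} (hf : LocallyLipschitz f) {k₀ k₁ : ℝ} (hk₁ : 0 ≤ k₁)
    (h : ∀ x v : X, clarkeDeriv f x v ≤ (k₀ + k₁ * ‖x‖) * ‖v‖) (x y : X) :
    f y - f x ≤ (k₀ + k₁ * (‖x‖ + ‖y‖)) * ‖y - x‖ := by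
  have := cd_mvt hf x (y - x) zero_le_one (c := (k₀ + k₁ * (‖x‖ + ‖y‖)) * ‖y - x‖) (e := 0) (by
    intro t ht
    refine (h _ _).trans ?_
    have e : x + t • (y - x) = (1 - t) • x + t • y := by
      rw [smul_sub, sub_smul, one_smul]; abel
    have : ‖x + t • (y - x)‖ ≤ ‖x‖ + ‖y‖ := by
      rw [e]
      refine (norm_add_le _ _).trans ?_
      rw [norm_smul, norm_smul, Real.norm_eq_abs, Real.norm_eq_abs, abs_of_nonneg ht.1,
        abs_of_nonneg (by linarith [ht.2])]
      nlinarith [norm_nonneg x, norm_nonneg y, ht.1, ht.2]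
    rw [zero_mul, sub_zero]
    gcongr)
  simp at this
  linarith

/-- Clarke derivative bound for semiconvex continuous functions -/
lemma cd_semiconvex {J : X → ℝ} (hJ : Continuous J) {δ : ℝ} (hδ : 0 ≤ δ)
    (h : ∀ (x v : X) (l : ℝ), 0 ≤ l → l ≤ 1 →
      J (x + l • v) ≤ (1 - l) * J x + l * J (x + v) + δ / 2 * (l * (1 - l)) * ‖v‖ ^ 2)
    (u v : X) : clarkeDeriv J u v ≤ J (u + v) - J u + δ / 2 * ‖v‖ ^ 2 := by
  have hpos : ∀ᶠ p : X × ℝ in (𝓝 u) ×ˢ (𝓝[>] (0 : ℝ)), 0 < p.2 :=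
    tendsto_snd.eventually self_mem_nhdsWithin
  have hle : ∀ᶠ p : X × ℝ in (𝓝 u) ×ˢ (𝓝[>] (0 : ℝ)), p.2 < 1 :=
    tendsto_snd.eventually (nhdsWithin_le_nhds (Iio_mem_nhds zero_lt_one))
  refine le_of_forall_pos_le_add fun ε hε => ?_
  have hlo : ∀ᶠ p : X × ℝ in (𝓝 u) ×ˢ (𝓝[>] (0 : ℝ)),
      J u - J (u - v) - 1 < J p.1 - J (p.1 - v) :=
    tendsto_fst.eventually
      ((Continuous.tendsto (by fun_prop : Continuous fun y => J y - J (y - v)) u).eventually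
        (lt_mem_nhds (by linarith)))
  have hup : ∀ᶠ p : X × ℝ in (𝓝 u) ×ˢ (𝓝[>] (0 : ℝ)),
      J (p.1 + v) - J p.1 < J (u + v) - J u + ε :=
    tendsto_fst.eventually
      ((Continuous.tendsto (by fun_prop : Continuous fun y => J (y + v) - J y) u).eventually
        (gt_mem_nhds (by linarith)))
  refine cd_le_of_bound (C := J u - J (u - v) - 1 - δ * ‖v‖ ^ 2) ?_ ?_
  · filter_upwards [hpos, hle, hlo] with p hp hp1 hlo
    obtain ⟨y, l⟩ := p
    simp only at hp hp1 hlo ⊢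
    have hl : 0 < 1 + l := by linarith
    have := h (y + l • v) (-((1 + l) • v)) (l / (1 + l)) (by positivity)
      (by rw [div_le_one hl]; linarith)
    have e1 : y + l • v + (l / (1 + l)) • (-((1 + l) • v)) = y := by
      rw [smul_neg, smul_smul, div_mul_cancel₀ _ hl.ne']; abel
    have e2 : y + l • v + (-((1 + l) • v)) = y - v := by
      rw [add_smul, one_smul]; abel
    rw [e1, e2, norm_neg, norm_smul, Real.norm_eq_abs, abs_of_pos hl] at this
    have e3 : (1 - l / (1 + l)) * J (y + l • v) + l / (1 + l) * J (y - v)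
       + δ / 2 * (l / (1 + l) * (1 - l / (1 + l))) * ((1 + l) * ‖v‖) ^ 2
       = (J (y + l • v) + l * J (y - v) + δ / 2 * l * (1 + l) * ‖v‖ ^ 2) / (1 + l) := by
      field_simp; ring
    rw [e3, le_div_iff₀ hl] at this
    rw [le_div_iff₀ hp]
    have hv : 0 ≤ δ * ‖v‖ ^ 2 := by positivity
    have h5 : l * (J u - J (u - v) - 1) ≤ l * (J y - J (y - v)) :=
      mul_le_mul_of_nonneg_left hlo.le hp.le
    have h6 : 0 ≤ l * (δ * ‖v‖ ^ 2) * (1 - l) :=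
      mul_nonneg (mul_nonneg hp.le hv) (by linarith)
    nlinarith
  · filter_upwards [hpos, hle, hup] with p hp hp1 hup
    rw [div_le_iff₀ hp]
    have := h p.1 v p.2 hp.le hp1.le
    have hv : 0 ≤ δ * ‖v‖ ^ 2 := by positivity
    have h5 := mul_le_mul_of_nonneg_left hup.le hp.le
    have h6 : 0 ≤ p.2 * (δ * ‖v‖ ^ 2) * p.2 := mul_nonneg (mul_nonneg hp.le hv) hp.le
    nlinarith

end helpers

lemma cd_max {E : Type*} [NormedAddCommGroup E] [InnerProductSpace ℝ E] [FiniteDimensional ℝ E]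
    {f : E → ℝ} (hf : LocallyLipschitz f) (x v : E) :
    ∃ η ∈ clarkeSubdiffInner f x, ⟪η, v⟫ = clarkeDeriv f x v := by
  by_cases hv : v = 0
  · subst hv
    obtain ⟨g, -, hg⟩ := exists_extension_of_le_sublinear (⟨⊥, 0⟩ : E →ₗ.[ℝ] ℝ)
      (clarkeDeriv f x) (fun c hc y => cd_smul hf x y hc) (cd_add hf x) (by
        rintro ⟨y, hy⟩
        have : y = 0 := by simpa using hy
        subst this
        simp [cd_zero])
    refine ⟨(InnerProductSpace.toDual ℝ E).symm (LinearMap.toContinuousLinearMap g), ?_, ?_⟩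
    · intro w; simpa using hg w
    · simp [cd_zero]
  · obtain ⟨g, hg1, hg⟩ := exists_extension_of_le_sublinear
      (LinearPMap.mkSpanSingleton (K := ℝ) v (clarkeDeriv f x v) hv)
      (clarkeDeriv f x) (fun c hc y => cd_smul hf x y hc) (cd_add hf x) (by
        rintro ⟨y, hy⟩
        obtain ⟨c, rfl⟩ := Submodule.mem_span_singleton.1 hy
        have e1 := LinearPMap.mkSpanSingleton'_apply (σ := RingHom.id ℝ) v (clarkeDeriv f x v)
          (fun c hc => by simp [(smul_eq_zero.1 hc).resolve_right hv]) c hy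
        refine (le_of_eq e1).trans ?_
        simp only [RingHom.id_apply, smul_eq_mul]
        rcases lt_trichotomy c 0 with hc | rfl | hc
        · have h1 := cd_add hf x (c • v) ((-c) • v)
          rw [← add_smul, add_neg_cancel, zero_smul, cd_zero, cd_smul hf x v (neg_pos.2 hc)] at h1
          linarith
        · simp [cd_zero]
        · rw [cd_smul hf x v hc])
    refine ⟨(InnerProductSpace.toDual ℝ E).symm (LinearMap.toContinuousLinearMap g), ?_, ?_⟩
    · intro w; simpa using hg w
    · have := hg1 ⟨v, Submodule.mem_span_singleton_self v⟩
      have h2 := LinearPMap.mkSpanSingleton_apply ℝ ℝ (σ := RingHom.id ℝ) hv (clarkeDeriv f x v)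
      have h3 : g v = clarkeDeriv f x v := this.trans h2
      simpa using h3

/-- Under (H1)–(H4), the Clarke subdifferential of the integral functional
`J(v) = ∫ j(x, v(x)) dμ` on `L²(Γ, μ; ℝ^d)` inherits the relaxed monotonicity:
`(z₁ − z₂, u₁ − u₂)_{L²} ≥ −δ₁ ‖u₁ − u₂‖_{L²}²` for all `zᵢ ∈ ∂J(uᵢ)`. -/
theorem clarkeSubdiff_integral_functional_relaxedMonotone {d : ℕ}
    {Γ : Type*} [MeasurableSpace Γ] (μ : Measure Γ) [IsFiniteMeasure μ]
    (j : Γ → EuclideanSpace ℝ (Fin d) → ℝ)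
    (hmeas : ∀ ξ : EuclideanSpace ℝ (Fin d), Measurable (fun x => j x ξ))
    (hint0 : Integrable (fun x => j x 0) μ)
    (hlip : ∀ᵐ x ∂μ, LocallyLipschitz (j x))
    (k₀ k₁ : ℝ) (hk₀ : 0 ≤ k₀) (hk₁ : 0 ≤ k₁)
    (hgrowth : ∀ᵐ x ∂μ, ∀ ξ : EuclideanSpace ℝ (Fin d),
      ∀ η ∈ clarkeSubdiffInner (j x) ξ, ‖η‖ ≤ k₀ + k₁ * ‖ξ‖)
    (δ₁ : ℝ) (hδ₁ : 0 ≤ δ₁)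
    (hrelmon : ∀ᵐ x ∂μ, ∀ ξ₁ ξ₂ : EuclideanSpace ℝ (Fin d),
      ∀ η₁ ∈ clarkeSubdiffInner (j x) ξ₁, ∀ η₂ ∈ clarkeSubdiffInner (j x) ξ₂,
        ⟪η₁ - η₂, ξ₁ - ξ₂⟫ ≥ -δ₁ * ‖ξ₁ - ξ₂‖ ^ 2)
    (hmeas' : ∀ u v : Lp (EuclideanSpace ℝ (Fin d)) 2 μ,
      Measurable (fun x => clarkeDeriv (j x) (u x) (v x))) :
    ∀ u₁ u₂ z₁ z₂ : Lp (EuclideanSpace ℝ (Fin d)) 2 μ,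
      (∀ w : Lp (EuclideanSpace ℝ (Fin d)) 2 μ,
        ⟪z₁, w⟫ ≤ clarkeDeriv
          (fun w' : Lp (EuclideanSpace ℝ (Fin d)) 2 μ => ∫ x, j x (w' x) ∂μ) u₁ w) →
      (∀ w : Lp (EuclideanSpace ℝ (Fin d)) 2 μ,
        ⟪z₂, w⟫ ≤ clarkeDeriv
          (fun w' : Lp (EuclideanSpace ℝ (Fin d)) 2 μ => ∫ x, j x (w' x) ∂μ) u₂ w) →
      ⟪z₁ - z₂, u₁ - u₂⟫ ≥ -δ₁ * ‖u₁ - u₂‖ ^ 2 := by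
  
  classical
  -- pointwise consequences
  have hgr : ∀ᵐ x ∂μ, ∀ ξ ζ : EuclideanSpace ℝ (Fin d),
      |j x ξ - j x ζ| ≤ (k₀ + k₁ * (‖ξ‖ + ‖ζ‖)) * ‖ξ - ζ‖ := by
    filter_upwards [hlip, hgrowth] with x hl hg ξ ζ
    have hb : ∀ ξ v, clarkeDeriv (j x) ξ v ≤ (k₀ + k₁ * ‖ξ‖) * ‖v‖ := by
      intro ξ v
      obtain ⟨η, hη, he⟩ := cd_max hl ξ v
      rw [← he]
      exact (real_inner_le_norm _ _).trans
        (mul_le_mul_of_nonneg_right (hg ξ η hη) (norm_nonneg _))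
    rw [abs_le]
    have h1 := growth_of hl hk₁ hb ξ ζ
    have h2 := growth_of hl hk₁ hb ζ ξ
    rw [norm_sub_rev] at h1
    rw [add_comm ‖ζ‖] at h2
    constructor <;> linarith
  have hsc : ∀ᵐ x ∂μ, ∀ (ξ v : EuclideanSpace ℝ (Fin d)) (l : ℝ), 0 ≤ l → l ≤ 1 →
      j x (ξ + l • v) ≤ (1 - l) * j x ξ + l * j x (ξ + v) + δ₁ / 2 * (l * (1 - l)) * ‖v‖ ^ 2 := by
    filter_upwards [hlip, hrelmon] with x hl hr ξ v l h0 h1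
    refine semiconvex_of hl ?_ ξ v h0 h1
    intro a b
    obtain ⟨η₁, hη₁, he₁⟩ := cd_max hl a (b - a)
    obtain ⟨η₂, hη₂, he₂⟩ := cd_max hl b (a - b)
    have := hr a b η₁ hη₁ η₂ hη₂
    rw [← he₁, ← he₂]
    simp only [inner_sub_left, inner_sub_right] at this ⊢
    linarith
  -- measurability
  have hms : ∀ u : Lp (EuclideanSpace ℝ (Fin d)) 2 μ,
      AEStronglyMeasurable (fun x => j x (u x)) μ := by
    intro u
    obtain ⟨S, hSsub, hS, hSμ⟩ := exists_measurable_superset_of_null (ae_iff.1 hlip)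
    let j' : EuclideanSpace ℝ (Fin d) → Γ → ℝ := fun ξ x => if x ∈ S then 0 else j x ξ
    have hj' : StronglyMeasurable (Function.uncurry j') := by
      refine stronglyMeasurable_uncurry_of_continuous_of_stronglyMeasurable ?_ ?_
      · intro x
        by_cases hx : x ∈ S
        · simp only [j', hx, if_true]; exact continuous_const
        · simp only [j', hx, if_false]
          have : LocallyLipschitz (j x) := by
            by_contra hn
            exact hx (hSsub hn)
          exact this.continuous
      · intro ξ
        exact (Measurable.ite hS measurable_const (hmeas ξ)).stronglyMeasurable
    have h2 : StronglyMeasurable (fun x => j' (u x) x) :=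
      hj'.comp_measurable ((Lp.stronglyMeasurable u).measurable.prodMk measurable_id)
    refine h2.aestronglyMeasurable.congr ?_
    have : ∀ᵐ x ∂μ, x ∉ S := measure_eq_zero_iff_ae_notMem.1 hSμ
    filter_upwards [this] with x hx
    simp [j', hx]
  let N : Lp (EuclideanSpace ℝ (Fin d)) 2 μ → Lp ℝ 2 μ :=
    LipschitzWith.compLp (lipschitzWith_one_norm) norm_zero
  have hN : Continuous N := LipschitzWith.continuous_compLp _ _
  have hNae : ∀ u, ∀ᵐ x ∂μ, N u x = ‖u x‖ := fun u =>
    LipschitzWith.coeFn_compLp lipschitzWith_one_norm norm_zero u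
  let K : Lp (EuclideanSpace ℝ (Fin d)) 2 μ → Lp (EuclideanSpace ℝ (Fin d)) 2 μ → Lp ℝ 2 μ :=
    fun u w => Lp.const 2 μ k₀ + k₁ • (N u + N w)
  have hK : ∀ u w, ∀ᵐ x ∂μ, (k₀ + k₁ * (‖u x‖ + ‖w x‖)) * ‖u x - w x‖ = ⟪K u w x, N (u - w) x⟫ := by
    intro u w
    filter_upwards [hNae u, hNae w, hNae (u - w), Lp.coeFn_sub u w, Lp.coeFn_add (N u) (N w),
      Lp.coeFn_smul k₁ (N u + N w), Lp.coeFn_add (Lp.const 2 μ k₀) (k₁ • (N u + N w)),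
      Lp.coeFn_const (p := 2) (μ := μ) (c := k₀)] with x h1 h2 h3 h4 h5 h6 h7 h8
    simp only [K]
    rw [h3, h4, h7, Pi.add_apply, h6, Pi.smul_apply, h5, Pi.add_apply, h8, h1, h2]
    simp
    ring
  have hdom : ∀ u w, ∀ᵐ x ∂μ, |j x (u x) - j x (w x)| ≤ ⟪K u w x, N (u - w) x⟫ := by
    intro u w
    filter_upwards [hK u w, hgr] with x h1 h2
    rw [← h1]; exact h2 _ _
  have hint : ∀ u : Lp (EuclideanSpace ℝ (Fin d)) 2 μ, Integrable (fun x => j x (u x)) μ := by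
    intro u
    have h1 : Integrable (fun x => |j x 0| + ⟪K u 0 x, N (u - 0) x⟫) μ :=
      hint0.abs.add (L2.integrable_inner (𝕜 := ℝ) _ _)
    refine h1.mono' (hms u) ?_
    filter_upwards [hdom u 0, Lp.coeFn_zero (EuclideanSpace ℝ (Fin d)) 2 μ] with x h2 h3
    rw [h3, Pi.zero_apply] at h2
    rw [Real.norm_eq_abs]
    have := abs_sub_abs_le_abs_sub (j x (u x)) (j x 0)
    linarith
  set J : Lp (EuclideanSpace ℝ (Fin d)) 2 μ → ℝ := fun w' => ∫ x, j x (w' x) ∂μ with hJdef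
  have hJdist : ∀ u w, |J u - J w| ≤ ⟪K u w, N (u - w)⟫ := by
    intro u w
    simp only [hJdef]
    rw [← integral_sub (hint u) (hint w), L2.inner_def]
    refine abs_integral_le_integral_abs.trans ?_
    exact integral_mono_ae ((hint u).sub (hint w)).abs (L2.integrable_inner (𝕜 := ℝ) _ _) (hdom u w)
  have hJc : Continuous J := by
    rw [continuous_iff_continuousAt]
    intro w
    have hc : Continuous (fun u => ⟪K u w, N (u - w)⟫) := by
      simp only [K]
      fun_prop
    have h0 : ⟪K w w, N (w - w)⟫ = 0 := by
      have : N 0 = 0 := LipschitzWith.compLp_zero _ _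
      rw [sub_self, this, inner_zero_right]
    have := hc.tendsto w
    simp only [h0] at this
    rw [ContinuousAt, tendsto_iff_dist_tendsto_zero]
    refine squeeze_zero (fun _ => dist_nonneg) (fun u => ?_) this
    rw [Real.dist_eq]
    exact hJdist u w
  have hJs : ∀ (y v : Lp (EuclideanSpace ℝ (Fin d)) 2 μ) (l : ℝ), 0 ≤ l → l ≤ 1 →
      J (y + l • v) ≤ (1 - l) * J y + l * J (y + v) + δ₁ / 2 * (l * (1 - l)) * ‖v‖ ^ 2 := by
    intro y v l h0 h1
    have hv : ‖v‖ ^ 2 = ∫ x, ⟪v x, v x⟫ ∂μ := by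
      rw [← real_inner_self_eq_norm_sq, L2.inner_def]
    have i1 := (hint y).const_mul (1 - l)
    have i2 := (hint (y + v)).const_mul l
    have i3 := (L2.integrable_inner (𝕜 := ℝ) v v).const_mul (δ₁ / 2 * (l * (1 - l)))
    rw [hv]
    simp only [hJdef]
    rw [← integral_const_mul, ← integral_const_mul, ← integral_const_mul,
      ← integral_add i1 i2, ← integral_add (i1.fun_add i2) i3]
    refine integral_mono_ae (hint _) ((i1.fun_add i2).fun_add i3) ?_
    filter_upwards [hsc, Lp.coeFn_add y (l • v), Lp.coeFn_smul l v, Lp.coeFn_add y v]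
      with x hx e1 e2 e3
    have := hx (y x) (v x) l h0 h1
    rw [e1, e3, Pi.add_apply, Pi.add_apply, e2, Pi.smul_apply, real_inner_self_eq_norm_sq]
    exact this
  intro u₁ u₂ z₁ z₂ hz₁ hz₂
  have a1 := (hz₁ (u₂ - u₁)).trans (cd_semiconvex hJc hδ₁ hJs u₁ (u₂ - u₁))
  have a2 := (hz₂ (u₁ - u₂)).trans (cd_semiconvex hJc hδ₁ hJs u₂ (u₁ - u₂))
  rw [add_sub_cancel, norm_sub_rev] at a1
  rw [add_sub_cancel] at a2
  have e : ⟪z₁ - z₂, u₁ - u₂⟫ = -(⟪z₁, u₂ - u₁⟫ + ⟪z₂, u₁ - u₂⟫) := by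
    simp only [inner_sub_left, inner_sub_right]; ring
  rw [e]
  linarith
end
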